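/- Let α ∈ (0,1), β ∈ (1+α, 2), and let W : (0,∞)² → ℝ be measurable with 0 ≤ W(x,y) ≤ (x/y)^α + (y/x)^α for all x,y > 0; set K_ε := 2 + εW with ε bounded above. For a ∈ [0, 2α] and b ≤ 0 there is a constant C > 0 such that for all g, h ∈ X_{−α,β}: ∫₀^∞ ∫₀^∞ ω_{−a,b}(y+z) W(y,z) |g(y)| |h(z)| dz dy ≤ C ‖g‖_{X_{−α,β}} ‖h‖_{X_{−α,β}}, and likewise ∫₀^∞ ∫₀^∞ ω_{−a,b}(y+z) K_ε(y,z) |g(y)| |h(z)| dz dy ≤ C ‖g‖_{X_{−α,β}} ‖h‖_{X_{−α,β}}. -/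

import Mathlib

open MeasureTheory Real Set Filter

noncomputable def weight (a b x : ℝ) : ℝ := if x ≤ 1 then x ^ a else x ^ b

noncomputable def Xnorm (a b : ℝ) (g : ℝ → ℝ) : ℝ :=
  ∫ x in Ioi (0:ℝ), |g x| * weight a b x

def MemX (a b : ℝ) (g : ℝ → ℝ) : Prop :=
  IntegrableOn (fun x => g x * weight a b x) (Ioi 0)

noncomputable def Kern (ε : ℝ) (W : ℝ → ℝ → ℝ) (x y : ℝ) : ℝ := 2 + ε * W x y

def GoodW (α : ℝ) (W : ℝ → ℝ → ℝ) : Prop :=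
  ContinuousOn (fun p : ℝ × ℝ => W p.1 p.2) (Ioi 0 ×ˢ Ioi 0) ∧
  (∀ x y : ℝ, 0 < x → 0 < y → W x y = W y x) ∧
  (∀ l x y : ℝ, 0 < l → 0 < x → 0 < y → W (l * x) (l * y) = W x y) ∧
  (∀ x y : ℝ, 0 < x → 0 < y → 0 ≤ W x y ∧ W x y ≤ (x / y) ^ α + (y / x) ^ α)

def IsProfile (K : ℝ → ℝ → ℝ) (φ : ℝ → ℝ) : Prop :=
  LocallyIntegrableOn φ (Ioi 0) ∧
  (∀ᵐ x ∂(volume.restrict (Ioi (0:ℝ))), 0 ≤ φ x) ∧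
  IntegrableOn (fun x => x * φ x) (Ioi 0) ∧
  (∀ᵐ x ∂(volume.restrict (Ioi (0:ℝ))),
    x ^ 2 * φ x = ∫ y in Ioo 0 x, ∫ z in Ioi (x - y), y * K y z * φ y * φ z)

def IsNormalised (φ : ℝ → ℝ) : Prop := ∫ x in Ioi (0:ℝ), x * φ x = 1

/-!
The norm of `X_{-α,β}` is an `L¹` norm, so a double integral `∫∫ k(y,z) |g(y)| |h(z)|` is at most
`C ‖g‖ ‖h‖` as soon as `|k(y,z)| ≤ C ω_{-α,β}(y) ω_{-α,β}(z)` pointwise. Since `2 ≤ t + t⁻¹` for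
`t = (y/z)^α`, both `W` and `K_ε` are bounded by a multiple of `(y/z)^α + (z/y)^α`, and by symmetry
it suffices to bound `ω_{-a,b}(y+z) (y/z)^α`. As `a ≤ 2α` and `b ≤ 0`, the weight `ω_{-a,b}` lies
below `ω_{-2α,0}`, which is nonincreasing; replacing `y + z` by `y` there and absorbing `y^α` leaves
`ω_{-α,α}(y) z^{-α}`, which is at most `ω_{-α,β}(y) ω_{-α,β}(z)`.
-/

section TensorBounds

variable {X Y E : Type*} [MeasurableSpace X] [MeasurableSpace Y] [NormedAddCommGroup E]
  {μ : Measure X} {ν : Measure Y} {f : X → Y → E} {p : X → ℝ} {q : Y → ℝ}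
  {C : ℝ}

theorem integrable_uncurry_of_norm_le_mul
    (hf : AEStronglyMeasurable (Function.uncurry f) (μ.prod ν))
    (hp : Integrable p μ) (hq : Integrable q ν)
    (hle : ∀ᵐ w ∂μ.prod ν, ‖f w.1 w.2‖ ≤ C * (p w.1 * q w.2)) :
    Integrable (Function.uncurry f) (μ.prod ν) :=
  ((hp.mul_prod hq).const_mul C).mono' hf hle

theorem norm_integral_integral_le_of_norm_le_mul [NormedSpace ℝ E] [SFinite μ] [SFinite ν]
    (hf : AEStronglyMeasurable (Function.uncurry f) (μ.prod ν))
    (hp : Integrable p μ) (hq : Integrable q ν)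
    (hle : ∀ᵐ w ∂μ.prod ν, ‖f w.1 w.2‖ ≤ C * (p w.1 * q w.2)) :
    ‖∫ x, ∫ y, f x y ∂ν ∂μ‖ ≤ C * (∫ x, p x ∂μ) * ∫ y, q y ∂ν := by
  rw [integral_integral (integrable_uncurry_of_norm_le_mul hf hp hq hle)]
  calc ‖∫ w, f w.1 w.2 ∂μ.prod ν‖
      ≤ ∫ w, C * (p w.1 * q w.2) ∂μ.prod ν :=
        norm_integral_le_of_norm_le ((hp.mul_prod hq).const_mul C) hle
    _ = C * (∫ x, p x ∂μ) * ∫ y, q y ∂ν := by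
        rw [integral_const_mul, integral_prod_mul, mul_assoc]

end TensorBounds

section Weight

variable {a b c d x y : ℝ}

theorem weight_of_le_one (hx : x ≤ 1) : weight a b x = x ^ a := if_pos hx

theorem weight_of_one_lt (hx : 1 < x) : weight a b x = x ^ b := if_neg hx.not_ge

theorem weight_self (c x : ℝ) : weight c c x = x ^ c := ite_self _

theorem weight_pos (hx : 0 < x) : 0 < weight a b x := by
  unfold weight
  split_ifs <;> positivity

theorem measurable_weight (a b : ℝ) : Measurable (weight a b) :=
  Measurable.ite measurableSet_Iic (by fun_prop) (by fun_prop)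

theorem weight_mul_rpow (hx : 0 < x) (c : ℝ) :
    weight a b x * x ^ c = weight (a + c) (b + c) x := by
  unfold weight
  split_ifs <;> rw [rpow_add hx]

theorem weight_le_weight (hx : 0 < x) (hca : c ≤ a) (hbd : b ≤ d) :
    weight a b x ≤ weight c d x := by
  rcases le_or_gt x 1 with h | h
  · simpa only [weight_of_le_one h] using rpow_le_rpow_of_exponent_ge hx h hca
  · simpa only [weight_of_one_lt h] using rpow_le_rpow_of_exponent_le h.le hbd

theorem rpow_le_weight (hx : 0 < x) (hac : a ≤ c) (hcb : c ≤ b) : x ^ c ≤ weight a b x :=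
  weight_self c x ▸ weight_le_weight hx hac hcb

theorem antitoneOn_weight (ha : a ≤ 0) (hb : b ≤ 0) : AntitoneOn (weight a b) (Ioi 0) := by
  intro x hx y _ hxy
  rcases le_or_gt y 1 with hy | hy
  · simpa only [weight_of_le_one hy, weight_of_le_one (hxy.trans hy)] using
      rpow_le_rpow_of_nonpos hx hxy ha
  rcases le_or_gt x 1 with hx1 | hx1
  · rw [weight_of_one_lt hy, weight_of_le_one hx1]
    exact (rpow_le_one_of_one_le_of_nonpos hy.le hb).trans
      (one_le_rpow_of_pos_of_le_one_of_nonpos hx hx1 ha)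
  · simpa only [weight_of_one_lt hy, weight_of_one_lt hx1] using rpow_le_rpow_of_nonpos hx hxy hb

end Weight

section MemX

variable {a b : ℝ} {g : ℝ → ℝ}

theorem MemX.integrableOn_abs_mul_weight (hg : MemX a b g) :
    IntegrableOn (fun x => |g x| * weight a b x) (Ioi 0) := by
  refine IntegrableOn.congr_fun (Integrable.norm hg) (fun x hx => ?_) measurableSet_Ioi
  simp only [norm_mul, norm_eq_abs, abs_of_pos (weight_pos hx)]

theorem MemX.aestronglyMeasurable (hg : MemX a b g) :
    AEStronglyMeasurable g (volume.restrict (Ioi 0)) := by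
  have hmul : AEStronglyMeasurable (fun x => g x * weight a b x) (volume.restrict (Ioi 0)) :=
    Integrable.aestronglyMeasurable hg
  refine (hmul.mul (measurable_weight a b).inv.aestronglyMeasurable).congr ?_
  filter_upwards [ae_restrict_mem measurableSet_Ioi] with x hx
  exact mul_inv_cancel_right₀ (weight_pos hx).ne' (g x)

end MemX

section KernelBound

variable {α β a b M y z : ℝ} {K : ℝ → ℝ → ℝ} {g h : ℝ → ℝ}

theorem two_le_rpow_div_add_rpow_div (α : ℝ) (hy : 0 < y) (hz : 0 < z) :
    2 ≤ (y / z) ^ α + (z / y) ^ α := by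
  have hmul : (y / z) ^ α * (z / y) ^ α = 1 := by
    rw [← mul_rpow (by positivity) (by positivity), div_mul_div_cancel₀ hz.ne', div_self hy.ne',
      one_rpow]
  have hu : 0 < (y / z) ^ α := by positivity
  have hv : 0 < (z / y) ^ α := by positivity
  nlinarith [sq_nonneg ((y / z) ^ α - (z / y) ^ α)]

theorem weight_add_mul_rpow_div_le (hα : 0 ≤ α) (hβ : α ≤ β) (ha : a ≤ 2 * α) (hb : b ≤ 0)
    (hy : 0 < y) (hz : 0 < z) :
    weight (-a) b (y + z) * (y / z) ^ α ≤ weight (-α) β y * weight (-α) β z := by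
  have hweight : weight (-a) b (y + z) ≤ weight (-(2 * α)) 0 y :=
    calc weight (-a) b (y + z)
        ≤ weight (-(2 * α)) 0 (y + z) := weight_le_weight (add_pos hy hz) (by linarith) hb
      _ ≤ weight (-(2 * α)) 0 y :=
          antitoneOn_weight (by linarith) le_rfl hy (add_pos hy hz) (by linarith)
  calc weight (-a) b (y + z) * (y / z) ^ α
      ≤ weight (-(2 * α)) 0 y * (y / z) ^ α := by gcongr
    _ = weight (-(2 * α)) 0 y * y ^ α * z ^ (-α) := by
        rw [div_rpow hy.le hz.le, rpow_neg hz.le, div_eq_mul_inv, mul_assoc]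
    _ = weight (-α) α y * z ^ (-α) := by
        rw [weight_mul_rpow hy]
        ring_nf
    _ ≤ weight (-α) β y * weight (-α) β z :=
        mul_le_mul (weight_le_weight hy le_rfl hβ)
          (rpow_le_weight hz le_rfl (by linarith)) (by positivity) (weight_pos hy).le

theorem weight_add_mul_rpow_div_add_rpow_div_le (hα : 0 ≤ α) (hβ : α ≤ β) (ha : a ≤ 2 * α)
    (hb : b ≤ 0) (hy : 0 < y) (hz : 0 < z) :
    weight (-a) b (y + z) * ((y / z) ^ α + (z / y) ^ α) ≤
      2 * (weight (-α) β y * weight (-α) β z) := by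
  have hyz := weight_add_mul_rpow_div_le hα hβ ha hb hy hz
  have hzy := weight_add_mul_rpow_div_le hα hβ ha hb hz hy
  rw [add_comm z y] at hzy
  linarith

theorem abs_weight_add_mul_kernel_le (hα : 0 ≤ α) (hβ : α ≤ β) (ha : a ≤ 2 * α) (hb : b ≤ 0)
    (hM : 0 ≤ M) (hy : 0 < y) (hz : 0 < z) (hK : |K y z| ≤ M * ((y / z) ^ α + (z / y) ^ α)) :
    |weight (-a) b (y + z) * K y z| ≤ 2 * M * (weight (-α) β y * weight (-α) β z) := by
  have hweight : 0 < weight (-a) b (y + z) := weight_pos (add_pos hy hz)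
  calc |weight (-a) b (y + z) * K y z|
      = weight (-a) b (y + z) * |K y z| := by rw [abs_mul, abs_of_pos hweight]
    _ ≤ weight (-a) b (y + z) * (M * ((y / z) ^ α + (z / y) ^ α)) := by gcongr
    _ = M * (weight (-a) b (y + z) * ((y / z) ^ α + (z / y) ^ α)) := by ring
    _ ≤ M * (2 * (weight (-α) β y * weight (-α) β z)) := by
        gcongr M * ?_
        exact weight_add_mul_rpow_div_add_rpow_div_le hα hβ ha hb hy hz
    _ = 2 * M * (weight (-α) β y * weight (-α) β z) := by ring

theorem aestronglyMeasurable_weight_add_mul_kernel_mul (c d : ℝ) {μ ν : Measure ℝ} [SFinite ν]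
    (hK : Measurable (Function.uncurry K)) (hg : AEStronglyMeasurable g μ)
    (hh : AEStronglyMeasurable h ν) :
    AEStronglyMeasurable
      (Function.uncurry fun y z => weight c d (y + z) * K y z * |g y| * |h z|) (μ.prod ν) :=
  have hweight : Measurable fun w : ℝ × ℝ => weight c d (w.1 + w.2) :=
    (measurable_weight c d).comp (measurable_fst.add measurable_snd)
  ((hweight.mul hK).aestronglyMeasurable.mul hg.norm.comp_fst).mul hh.norm.comp_snd

theorem abs_integral_integral_weight_add_mul_kernel_le (hα : 0 ≤ α) (hβ : α ≤ β)
    (ha : a ≤ 2 * α) (hb : b ≤ 0) (hM : 0 ≤ M) (hKmeas : Measurable (Function.uncurry K))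
    (hK : ∀ y z, 0 < y → 0 < z → |K y z| ≤ M * ((y / z) ^ α + (z / y) ^ α))
    (hg : MemX (-α) β g) (hh : MemX (-α) β h) :
    |(∫ y in Ioi 0, ∫ z in Ioi 0, weight (-a) b (y + z) * K y z * |g y| * |h z|)| ≤
      2 * M * Xnorm (-α) β g * Xnorm (-α) β h := by
  refine norm_integral_integral_le_of_norm_le_mul
    (aestronglyMeasurable_weight_add_mul_kernel_mul (-a) b hKmeas
      hg.aestronglyMeasurable hh.aestronglyMeasurable)
    hg.integrableOn_abs_mul_weight hh.integrableOn_abs_mul_weight ?_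
  rw [Measure.prod_restrict]
  filter_upwards [ae_restrict_mem (measurableSet_Ioi.prod measurableSet_Ioi)] with ⟨y, z⟩ ⟨hy, hz⟩
  calc ‖weight (-a) b (y + z) * K y z * |g y| * |h z|‖
      = |weight (-a) b (y + z) * K y z| * |g y| * |h z| := by
        rw [norm_eq_abs, abs_mul, abs_mul, abs_abs, abs_abs]
    _ ≤ 2 * M * (weight (-α) β y * weight (-α) β z) * |g y| * |h z| := by
        gcongr
        exact abs_weight_add_mul_kernel_le hα hβ ha hb hM hy hz (hK y z hy hz)
    _ = 2 * M * (|g y| * weight (-α) β y * (|h z| * weight (-α) β z)) := by ring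

end KernelBound

section Kern

variable {α E ε : ℝ} {W : ℝ → ℝ → ℝ}

theorem measurable_uncurry_Kern (ε : ℝ) (hW : Measurable (Function.uncurry W)) :
    Measurable (Function.uncurry (Kern ε W)) :=
  (hW.const_mul ε).const_add 2

theorem abs_Kern_le {y z : ℝ} (hε : |ε| ≤ E) (hy : 0 < y) (hz : 0 < z)
    (hW : |W y z| ≤ (y / z) ^ α + (z / y) ^ α) :
    |Kern ε W y z| ≤ (1 + E) * ((y / z) ^ α + (z / y) ^ α) :=
  calc |2 + ε * W y z|
      ≤ 2 + |ε| * |W y z| := by simpa only [abs_mul, abs_two] using abs_add_le 2 (ε * W y z)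
    _ ≤ ((y / z) ^ α + (z / y) ^ α) + E * ((y / z) ^ α + (z / y) ^ α) := by
        gcongr
        · exact two_le_rpow_div_add_rpow_div α hy hz
        · exact (abs_nonneg ε).trans hε
    _ = (1 + E) * ((y / z) ^ α + (z / y) ^ α) := by ring

end Kern

theorem stmt14_general {α β a b E : ℝ} (hα : 0 ≤ α) (hβ : α ≤ β) (ha : a ≤ 2 * α) (hb : b ≤ 0)
    (hE : 0 ≤ E) {W : ℝ → ℝ → ℝ} (hWmeas : Measurable (Function.uncurry W))
    (hW : ∀ y z, 0 < y → 0 < z → |W y z| ≤ (y / z) ^ α + (z / y) ^ α) :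
    ∃ C > (0 : ℝ), ∀ ε : ℝ, |ε| ≤ E →
      ∀ g h : ℝ → ℝ, MemX (-α) β g → MemX (-α) β h →
        |(∫ y in Ioi 0, ∫ z in Ioi 0, weight (-a) b (y + z) * W y z * |g y| * |h z|)| ≤
          C * Xnorm (-α) β g * Xnorm (-α) β h ∧
        |(∫ y in Ioi 0, ∫ z in Ioi 0, weight (-a) b (y + z) * Kern ε W y z * |g y| * |h z|)| ≤
          C * Xnorm (-α) β g * Xnorm (-α) β h := by
  refine ⟨2 * (1 + E), by positivity, fun ε hε g h hg hh => ⟨?_, ?_⟩⟩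
  · refine abs_integral_integral_weight_add_mul_kernel_le hα hβ ha hb (by positivity) hWmeas
      (fun y z hy hz => (hW y z hy hz).trans ?_) hg hh
    exact le_mul_of_one_le_left (by positivity) (by linarith)
  · exact abs_integral_integral_weight_add_mul_kernel_le hα hβ ha hb (by positivity)
      (measurable_uncurry_Kern ε hWmeas)
      (fun y z hy hz => abs_Kern_le hε hy hz (hW y z hy hz)) hg hh

theorem stmt14 (α β : ℝ) (hα : α ∈ Ioo (0:ℝ) 1) (hβ : β ∈ Ioo (1 + α) 2)
    (W : ℝ → ℝ → ℝ) (hWmeas : Measurable (Function.uncurry W))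
    (hWb : ∀ x y : ℝ, 0 < x → 0 < y → 0 ≤ W x y ∧ W x y ≤ (x / y) ^ α + (y / x) ^ α)
    (a b : ℝ) (ha : a ∈ Icc (0:ℝ) (2 * α)) (hb : b ≤ 0) :
    ∃ C > (0:ℝ), ∀ ε : ℝ, 0 < ε → ε ≤ 1 →
      ∀ g h : ℝ → ℝ, MemX (-α) β g → MemX (-α) β h →
        (∫ y in Ioi (0:ℝ), ∫ z in Ioi (0:ℝ),
            weight (-a) b (y + z) * W y z * |g y| * |h z|) ≤
          C * Xnorm (-α) β g * Xnorm (-α) β h ∧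
        (∫ y in Ioi (0:ℝ), ∫ z in Ioi (0:ℝ),
            weight (-a) b (y + z) * Kern ε W y z * |g y| * |h z|) ≤
          C * Xnorm (-α) β g * Xnorm (-α) β h := by
  obtain ⟨C, hC, hle⟩ := stmt14_general hα.1.le ((le_add_of_nonneg_left zero_le_one).trans hβ.1.le)
    ha.2 hb zero_le_one hWmeas
    fun y z hy hz => (abs_of_nonneg (hWb y z hy hz).1).trans_le (hWb y z hy hz).2
  exact ⟨C, hC, fun ε hε0 hε1 g h hg hh =>
    (hle ε (abs_le.2 ⟨by linarith, hε1⟩) g h hg hh).imp le_of_abs_le le_of_abs_le⟩
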